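/- Let P be a set of n points in the plane in convex position and let k ≥ 1 be an integer. Then every partition of the edge set of the complete geometric graph K(P) into classes each of which is k-plane uses at least (n−1)/(4.93·√k) classes; that is, if the partition has c classes then c ≥ (n−1)/(4.93·√k). -/

import Mathlib

/-- Points of the plane. -/
abbrev Pt : Type := ℝ × ℝ

/-- A finite point set is in general position if no three of its points are collinear. -/
def GenPos (P : Finset Pt) : Prop :=
  ∀ p ∈ P, ∀ q ∈ P, ∀ r ∈ P, p ≠ q → p ≠ r → q ≠ r →
    ¬ Collinear ℝ ({p, q, r} : Set Pt)

/-- A finite point set is in convex position: general position and no point lies in the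
convex hull of the others. -/
def ConvexPos (P : Finset Pt) : Prop :=
  GenPos P ∧ ∀ p ∈ P, p ∉ convexHull ℝ ((P.erase p : Finset Pt) : Set Pt)

/-- The edge set of the complete geometric graph on `P`: all unordered pairs of
distinct points of `P`. -/
def KEdges (P : Finset Pt) : Set (Sym2 Pt) :=
  {e | ∃ p ∈ P, ∃ q ∈ P, p ≠ q ∧ e = s(p, q)}

/-- Two edges cross: they share no endpoint and their open segments intersect. -/
def Cross (e f : Sym2 Pt) : Prop :=
  (∀ x, x ∈ e → x ∉ f) ∧
    ∃ p q r s : Pt, e = s(p, q) ∧ f = s(r, s) ∧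
      (openSegment ℝ p q ∩ openSegment ℝ r s).Nonempty

/-- A set of edges is `k`-plane if each of its edges crosses at most `k` other edges
of the set. -/
def KPlane (k : ℕ) (E : Set (Sym2 Pt)) : Prop :=
  ∀ e ∈ E, {f | f ∈ E ∧ Cross e f}.ncard ≤ k

/-- A set of edges is `k`-quasi-plane if it contains no `k` pairwise crossing edges. -/
def KQuasiPlane (k : ℕ) (E : Set (Sym2 Pt)) : Prop :=
  ¬ ∃ S : Finset (Sym2 Pt), ↑S ⊆ E ∧ S.card = k ∧
      (S : Set (Sym2 Pt)).Pairwise Cross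

/-- The set of crossing pairs (unordered) of a set of edges. -/
def CrossPairs (E : Set (Sym2 Pt)) : Set (Sym2 (Sym2 Pt)) :=
  {c | ∃ e ∈ E, ∃ f ∈ E, Cross e f ∧ c = s(e, f)}

/-- A crossing family in `K(P)`: a finite set of pairwise crossing edges of `K(P)`. -/
def CrossingFamily (P : Finset Pt) (S : Finset (Sym2 Pt)) : Prop :=
  ↑S ⊆ KEdges P ∧ (S : Set (Sym2 Pt)).Pairwise Cross

/-- `E` forms a spanning tree on the point set `P`: all edges are edges of `K(P)` and the
corresponding graph on the points of `P` is connected and acyclic. -/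
def IsSpanningTreeOn (P : Finset Pt) (E : Set (Sym2 Pt)) : Prop :=
  E ⊆ KEdges P ∧
    (SimpleGraph.fromRel (fun a b : {x // x ∈ P} => s((a : Pt), (b : Pt)) ∈ E)).IsTree

/-!
Seen from its lexicographically least point, a set in convex position is swept in angular order,
and this order makes it a convex polygon, in which chords with alternating endpoints cross. Let
`E` be a set of diagonals of an `n`-gon, each crossing at most `k` others. If every diagonal in
`E` has at most `t` vertices between its endpoints, then `E` has at most `(n - 2) * t` elements.
Otherwise cut the polygon along the shortest diagonal with `m > t` vertices between its endpoints:
this loses that diagonal, the at most `k` crossing it, and at most `m * t` nested inside it, all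
of them short. Since `m ≥ t + 1` vertices disappear, induction bounds `E` by `A * (n - 3)` as soon
as `2 * t ≤ A` and `k + 1 ≤ (A - t) * (t + 1)`; taking `t = ⌊√k⌋ - 1` allows `A = 2.465 * √k`.
Distributing the `n * (n - 3) / 2` diagonals of `P` among the classes gives the theorem.
-/

section ConvexPolygon

open Finset

variable {α : Type*} [LinearOrder α] {S : Finset α} {e f : α × α}

/-- The number of elements of `S` below `x`: for `x ∈ S`, the position of `x` in `S`, from `0`. -/
def rankIn (S : Finset α) (x : α) : ℕ := #{y ∈ S | y < x}

/-- The vertices of the polygon `S` strictly between the endpoints of the chord `e`. -/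
def verticesBetween (S : Finset α) (e : α × α) : Finset α := {x ∈ S | e.1 < x ∧ x < e.2}

/-- The polygon left over when the chord `e` cuts off the vertices between its endpoints. -/
def cutAlong (S : Finset α) (e : α × α) : Finset α := S \ verticesBetween S e

/-- `e` is a diagonal of the convex polygon whose vertices, in cyclic order, are the elements of
`S` in increasing order. A chord is encoded by its endpoints, the smaller one first, and it is a
diagonal if there are vertices on both sides of it. -/
structure IsDiagonal (S : Finset α) (e : α × α) : Prop where
  left_mem : e.1 ∈ S
  right_mem : e.2 ∈ S
  left_lt_right : e.1 < e.2
  between_nonempty : (verticesBetween S e).Nonempty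
  exists_outside : ∃ x ∈ S, x < e.1 ∨ e.2 < x

/-- Two chords of a convex polygon cross: their endpoints alternate along the boundary. -/
def Interleaves (e f : α × α) : Prop :=
  (f.1 < e.1 ∧ e.1 < f.2 ∧ f.2 < e.2) ∨ (e.1 < f.1 ∧ f.1 < e.2 ∧ e.2 < f.2)

instance (e f : α × α) : Decidable (Interleaves e f) := inferInstanceAs (Decidable (_ ∨ _))

lemma mem_verticesBetween {x : α} :
    x ∈ verticesBetween S e ↔ x ∈ S ∧ e.1 < x ∧ x < e.2 := mem_filter

lemma mem_cutAlong {x : α} : x ∈ cutAlong S e ↔ x ∈ S ∧ (x ≤ e.1 ∨ e.2 ≤ x) := by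
  grind [cutAlong, mem_verticesBetween]

lemma card_cutAlong_add : #(cutAlong S e) + #(verticesBetween S e) = #S :=
  card_sdiff_add_card_eq_card (filter_subset _ _)

lemma rankIn_mono : Monotone (rankIn S) := fun _ _ hxy ↦
  card_le_card <| monotone_filter_right _ fun _ _ hz ↦ hz.trans_le hxy

lemma rankIn_lt_card {x : α} (hx : x ∈ S) : rankIn S x < #S :=
  card_lt_card <| filter_ssubset.2 ⟨x, hx, lt_irrefl x⟩

lemma card_verticesBetween_add_rankIn (he : e.1 ∈ S) (hlt : e.1 < e.2) :
    #(verticesBetween S e) + rankIn S e.1 + 1 = rankIn S e.2 := by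
  have hsplit : ({y ∈ S | y < e.2} : Finset α) =
      insert e.1 (verticesBetween S e ∪ {y ∈ S | y < e.1}) := by
    ext; grind [mem_verticesBetween]
  have hdisj : Disjoint (verticesBetween S e) {y ∈ S | y < e.1} := by
    rw [disjoint_left]; grind [mem_verticesBetween]
  have hnot : e.1 ∉ verticesBetween S e ∪ {y ∈ S | y < e.1} := by grind [mem_verticesBetween]
  rw [rankIn, rankIn, hsplit, card_insert_of_notMem hnot, card_union_of_disjoint hdisj]

lemma rankIn_injOn : Set.InjOn (rankIn S) S := by
  refine StrictMonoOn.injOn fun x hx y _ hxy ↦ ?_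
  have : _ + rankIn S x + 1 = rankIn S y := card_verticesBetween_add_rankIn (e := (x, y)) hx hxy
  omega

lemma IsDiagonal.rankIn_left_add (he : IsDiagonal S e) :
    #(verticesBetween S e) + rankIn S e.1 + 1 = rankIn S e.2 :=
  card_verticesBetween_add_rankIn he.left_mem he.left_lt_right

lemma IsDiagonal.three_le_card_cutAlong (he : IsDiagonal S e) : 3 ≤ #(cutAlong S e) := by
  obtain ⟨x, hx, hout⟩ := he.exists_outside
  have hlt := he.left_lt_right
  refine two_lt_card.2 ⟨e.1, ?_, e.2, ?_, x, ?_, ?_⟩ <;>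
    grind [mem_cutAlong, he.left_mem, he.right_mem]

lemma IsDiagonal.four_le_card (he : IsDiagonal S e) : 4 ≤ #S := by
  have := he.three_le_card_cutAlong
  have := he.between_nonempty.card_pos
  have := card_cutAlong_add (S := S) (e := e)
  omega

lemma IsDiagonal.cutAlong_ssubset (he : IsDiagonal S e) : cutAlong S e ⊂ S :=
  sdiff_ssubset (filter_subset _ _) he.between_nonempty

lemma IsDiagonal.isDiagonal_cutAlong (he : IsDiagonal S e) (hf : IsDiagonal S f) (hne : f ≠ e)
    (h₁ : f.1 ∈ cutAlong S e) (h₂ : f.2 ∈ cutAlong S e) : IsDiagonal (cutAlong S e) f := by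
  obtain ⟨x, hx⟩ := hf.between_nonempty
  obtain ⟨y, hy, hout⟩ := hf.exists_outside
  have he₁ : e.1 ∈ cutAlong S e := mem_cutAlong.2 ⟨he.left_mem, .inl le_rfl⟩
  have he₂ : e.2 ∈ cutAlong S e := mem_cutAlong.2 ⟨he.right_mem, .inr le_rfl⟩
  have hne' : f.1 ≠ e.1 ∨ f.2 ≠ e.2 := by grind
  refine ⟨h₁, h₂, hf.left_lt_right, ?_, ?_⟩
  · by_cases hxe : x ∈ cutAlong S e
    · exact ⟨x, by grind [mem_verticesBetween]⟩
    by_cases hlt : f.1 < e.1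
    · exact ⟨e.1, by grind [mem_verticesBetween, mem_cutAlong]⟩
    · exact ⟨e.2, by grind [mem_verticesBetween, mem_cutAlong]⟩
  · by_cases hye : y ∈ cutAlong S e
    · exact ⟨y, hye, hout⟩
    rcases hout with hlt | hlt
    · exact ⟨e.1, he₁, by grind [mem_cutAlong]⟩
    · exact ⟨e.2, he₂, by grind [mem_cutAlong]⟩

lemma IsDiagonal.endpoints_mem_cutAlong_or (hf : IsDiagonal S f) (e : α × α) :
    (f.1 ∈ cutAlong S e ∧ f.2 ∈ cutAlong S e) ∨ Interleaves e f ∨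
      (e.1 ≤ f.1 ∧ f.2 ≤ e.2) := by
  have := hf.left_lt_right
  grind [mem_cutAlong, Interleaves, hf.left_mem, hf.right_mem]

lemma choose_two_card_le_card_diagonals_add [DecidablePred (IsDiagonal S)] :
    (#S).choose 2 ≤ #{e ∈ S ×ˢ S | IsDiagonal S e} + #S := by
  set sides : Finset (α × α) := {e ∈ S ×ˢ S | e.1 < e.2 ∧ ¬ IsDiagonal S e} with hsides
  have hside : ∀ e ∈ sides, e.1 ∈ S ∧ e.2 ∈ S ∧ e.1 < e.2 ∧
      (verticesBetween S e = ∅ ∨ ∀ x ∈ S, e.1 ≤ x ∧ x ≤ e.2) := by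
    intro e he
    simp only [hsides, mem_filter, mem_product] at he
    obtain ⟨⟨h₁, h₂⟩, hlt, hnot⟩ := he
    refine ⟨h₁, h₂, hlt, or_iff_not_imp_left.2 fun hne x hx ↦ ?_⟩
    by_contra hout
    exact hnot ⟨h₁, h₂, hlt, nonempty_iff_ne_empty.2 hne, x, hx, by grind⟩
  -- A side joining consecutive vertices is charged to its left end, the closing side to its right.
  have hcharge : #sides ≤ #S := by
    refine card_le_card_of_injOn (fun e ↦ if verticesBetween S e = ∅ then e.1 else e.2)
      (fun e he ↦ by grind) fun e he f hf hef ↦ ?_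
    have hadj : ∀ g : α × α, verticesBetween S g = ∅ → ∀ x ∈ S, g.1 < x → g.2 ≤ x := by
      intro g hg x hx hlt
      by_contra! hxg
      exact notMem_empty x (hg ▸ mem_verticesBetween.2 ⟨hx, hlt, hxg⟩)
    have := hside e he
    have := hside f hf
    grind
  calc (#S).choose 2 = #{e ∈ S ×ˢ S | e.1 < e.2} := card_product_filter_lt.symm
    _ ≤ #({e ∈ S ×ˢ S | IsDiagonal S e} ∪ sides) := card_le_card fun e he ↦ by grind
    _ ≤ #{e ∈ S ×ˢ S | IsDiagonal S e} + #S := (card_union_le _ _).trans (by gcongr)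

variable {E : Finset (α × α)} {k t : ℕ}

lemma card_le_of_short_diagonals {a w : ℕ} (hE : ∀ e ∈ E, IsDiagonal S e)
    (hleft : ∀ e ∈ E, rankIn S e.1 ∈ Ico a (a + w))
    (hshort : ∀ e ∈ E, #(verticesBetween S e) ≤ t) : #E ≤ w * t := by
  have hcard : #(Ico a (a + w) ×ˢ Icc 1 t) = w * t := by simp
  rw [← hcard]
  refine card_le_card_of_injOn (fun e ↦ (rankIn S e.1, #(verticesBetween S e)))
    (fun e he ↦ ?_) fun e he f hf hef ↦ ?_
  · have := (hE e he).between_nonempty.card_pos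
    exact mem_product.2 ⟨hleft e he, mem_Icc.2 ⟨this, hshort e he⟩⟩
  · have hrank : rankIn S e.1 = rankIn S f.1 := congrArg Prod.fst hef
    have : #(verticesBetween S e) = #(verticesBetween S f) := congrArg Prod.snd hef
    have := (hE e he).rankIn_left_add
    have := (hE f hf).rankIn_left_add
    exact Prod.ext (rankIn_injOn (hE e he).left_mem (hE f hf).left_mem hrank)
      (rankIn_injOn (hE e he).right_mem (hE f hf).right_mem (by lia))

lemma card_le_of_forall_short (hE : ∀ e ∈ E, IsDiagonal S e)
    (hshort : ∀ e ∈ E, #(verticesBetween S e) ≤ t) : #E ≤ (#S - 2) * t := by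
  refine card_le_of_short_diagonals (a := 0) hE (fun e he ↦ ?_) hshort
  have := (hE e he).rankIn_left_add
  have := (hE e he).between_nonempty.card_pos
  have := rankIn_lt_card (hE e he).right_mem
  grind

lemma card_nested_le (he : IsDiagonal S e) (hE : ∀ f ∈ E, IsDiagonal S f)
    (hnested : ∀ f ∈ E, e.1 ≤ f.1 ∧ f.2 ≤ e.2)
    (hshort : ∀ f ∈ E, #(verticesBetween S f) ≤ t) : #E ≤ #(verticesBetween S e) * t := by
  refine card_le_of_short_diagonals (a := rankIn S e.1) hE (fun f hf ↦ ?_) hshort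
  have := he.rankIn_left_add
  have := (hE f hf).rankIn_left_add
  have := (hE f hf).between_nonempty.card_pos
  have := rankIn_mono (S := S) (hnested f hf).1
  have := rankIn_mono (S := S) (hnested f hf).2
  grind

lemma eq_of_nested_of_card_verticesBetween_le (he : IsDiagonal S e) (hf : IsDiagonal S f)
    (hnested : e.1 ≤ f.1 ∧ f.2 ≤ e.2) (hle : #(verticesBetween S e) ≤ #(verticesBetween S f)) :
    f = e := by
  have := he.rankIn_left_add
  have := hf.rankIn_left_add
  have := rankIn_mono (S := S) hnested.1
  have := rankIn_mono (S := S) hnested.2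
  exact Prod.ext (rankIn_injOn hf.left_mem he.left_mem (by lia))
    (rankIn_injOn hf.right_mem he.right_mem (by lia))

lemma card_le_card_filter_cutAlong_add (hE : ∀ f ∈ E, IsDiagonal S f) (he : e ∈ E)
    (hcross : #{f ∈ E | Interleaves e f} ≤ k)
    (hmin : ∀ f ∈ E, t < #(verticesBetween S f) → #(verticesBetween S e) ≤ #(verticesBetween S f)) :
    #E ≤ #{f ∈ E | f ≠ e ∧ f.1 ∈ cutAlong S e ∧ f.2 ∈ cutAlong S e} +
      (k + 1 + #(verticesBetween S e) * t) := by
  set kept := {f ∈ E | f ≠ e ∧ f.1 ∈ cutAlong S e ∧ f.2 ∈ cutAlong S e}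
  set crossing := {f ∈ E | Interleaves e f}
  set nested := {f ∈ E | f ≠ e ∧ e.1 ≤ f.1 ∧ f.2 ≤ e.2}
  have hcover : E ⊆ kept ∪ insert e (crossing ∪ nested) := by
    intro f hf
    have := (hE f hf).endpoints_mem_cutAlong_or e
    grind
  have hnested : #nested ≤ #(verticesBetween S e) * t := by
    refine card_nested_le (hE e he) (fun f hf ↦ hE f (mem_of_mem_filter f hf))
      (fun f hf ↦ (mem_filter.1 hf).2.2) fun f hf ↦ ?_
    obtain ⟨hfE, hne, hin⟩ := mem_filter.1 hf
    by_contra! hlong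
    exact hne (eq_of_nested_of_card_verticesBetween_le (hE e he) (hE f hfE) hin (hmin f hfE hlong))
  calc #E ≤ #kept + (#(crossing ∪ nested) + 1) := (card_le_card hcover).trans <|
        (card_union_le _ _).trans (by gcongr; exact card_insert_le _ _)
    _ ≤ #kept + (#crossing + #nested + 1) := by gcongr; exact card_union_le _ _
    _ ≤ _ := by lia

theorem card_le_of_card_interleaves_le {A : ℝ} (ht : 2 * t ≤ A) (hA : k + 1 ≤ (A - t) * (t + 1))
    (hS : 3 ≤ #S) (hE : ∀ e ∈ E, IsDiagonal S e)
    (hcross : ∀ e ∈ E, #{f ∈ E | Interleaves e f} ≤ k) : (#E : ℝ) ≤ A * (#S - 3) := by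
  have hA₀ : 0 ≤ A := le_trans (by positivity) ht
  induction S using Finset.strongInduction generalizing E with
  | H S ih =>
  rcases E.eq_empty_or_nonempty with rfl | ⟨e₀, he₀⟩
  · have : (3 : ℝ) ≤ #S := mod_cast hS
    simpa using mul_nonneg hA₀ (sub_nonneg.2 this)
  rcases {e ∈ E | t < #(verticesBetween S e)}.eq_empty_or_nonempty with hshort | hlong
  · have hbound : #E ≤ (#S - 2) * t := card_le_of_forall_short hE fun e he ↦
      not_lt.1 (filter_eq_empty_iff.1 hshort he)
    have h₄ : 4 ≤ #S := (hE e₀ he₀).four_le_card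
    have h₄' : (4 : ℝ) ≤ #S := mod_cast h₄
    calc (#E : ℝ) ≤ (#S - 2) * t := by
          rw [← Nat.cast_ofNat, ← Nat.cast_sub (by lia)]; exact_mod_cast hbound
      _ ≤ 2 * t * (#S - 3) := by nlinarith
      _ ≤ A * (#S - 3) := by gcongr; linarith
  · obtain ⟨e, he, hmin⟩ := exists_min_image _ (fun e ↦ #(verticesBetween S e)) hlong
    obtain ⟨heE, hlong⟩ := mem_filter.1 he
    have heS := hE e heE
    have hstep := card_le_card_filter_cutAlong_add hE heE (hcross e heE)
      fun f hf hlt ↦ hmin f (mem_filter.2 ⟨hf, hlt⟩)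
    set kept := {f ∈ E | f ≠ e ∧ f.1 ∈ cutAlong S e ∧ f.2 ∈ cutAlong S e}
    have hkept : (#kept : ℝ) ≤ A * (#(cutAlong S e) - 3) := by
      refine ih _ heS.cutAlong_ssubset heS.three_le_card_cutAlong (fun f hf ↦ ?_) fun f hf ↦ ?_
      · obtain ⟨hfE, hne, h₁, h₂⟩ := mem_filter.1 hf
        exact heS.isDiagonal_cutAlong (hE f hfE) hne h₁ h₂
      · exact (card_le_card (filter_subset_filter _ (filter_subset _ _))).trans
          (hcross f (mem_of_mem_filter f hf))
    have hpay : (k + 1 : ℝ) ≤ (A - t) * #(verticesBetween S e) := by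
      refine hA.trans (mul_le_mul_of_nonneg_left (mod_cast hlong) ?_)
      linarith [(Nat.cast_nonneg t : (0 : ℝ) ≤ t)]
    have hcard : (#(cutAlong S e) : ℝ) + #(verticesBetween S e) = #S := mod_cast card_cutAlong_add
    calc (#E : ℝ) ≤ #kept + (k + 1 + #(verticesBetween S e) * t) := mod_cast hstep
      _ ≤ A * (#(cutAlong S e) - 3) + A * #(verticesBetween S e) := by linarith
      _ = A * (#S - 3) := by rw [← hcard]; ring

end ConvexPolygon

section PlaneGeometry

variable {a b c d : Pt}

/-- Twice the signed area of the triangle `abc`, positive when it is traversed counterclockwise. -/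
def orient (a b c : Pt) : ℝ := (b.1 - a.1) * (c.2 - a.2) - (b.2 - a.2) * (c.1 - a.1)

lemma orient_swap_right (a b c : Pt) : orient a c b = -orient a b c := by
  unfold orient; ring

lemma orient_rotate (a b c : Pt) : orient b c a = orient a b c := by
  unfold orient; ring

lemma ne_of_orient_pos (h : 0 < orient a b c) : a ≠ b ∧ b ≠ c ∧ a ≠ c := by
  refine ⟨?_, ?_, ?_⟩ <;> rintro rfl <;> unfold orient at h <;> linarith

lemma collinear_of_orient_eq_zero (h : orient a b c = 0) : Collinear ℝ ({a, b, c} : Set Pt) := by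
  by_cases hab : a = b
  · simpa only [hab, Set.insert_eq_of_mem (Set.mem_insert b _)] using collinear_pair ℝ b c
  suffices hc : c ∈ line[ℝ, a, b] by
    rw [show ({a, b, c} : Set Pt) = {c, a, b} by grind, collinear_insert_iff_of_mem_affineSpan hc]
    exact collinear_pair ℝ a b
  have hne : (b.1 - a.1) ^ 2 + (b.2 - a.2) ^ 2 ≠ 0 := fun h₀ ↦
    hab (Prod.ext (by nlinarith) (by nlinarith))
  unfold orient at h
  -- The coefficient is that of the orthogonal projection of `c - a` to `b - a`.
  have hproj : AffineMap.lineMap a b (((b.1 - a.1) * (c.1 - a.1) + (b.2 - a.2) * (c.2 - a.2)) /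
      ((b.1 - a.1) ^ 2 + (b.2 - a.2) ^ 2)) = c := by
    ext <;> simp only [AffineMap.lineMap_apply, vsub_eq_sub, vadd_eq_add, Prod.fst_add,
      Prod.smul_fst, Prod.fst_sub, Prod.snd_add, Prod.smul_snd, Prod.snd_sub, smul_eq_mul] <;>
      field_simp
    · linear_combination (b.2 - a.2) * h
    · linear_combination (-(b.1 - a.1)) * h
  exact hproj ▸ AffineMap.lineMap_mem_affineSpan_pair _ a b

lemma GenPos.orient_ne_zero {P : Finset Pt} (hP : GenPos P) (ha : a ∈ P) (hb : b ∈ P) (hc : c ∈ P)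
    (hab : a ≠ b) (hac : a ≠ c) (hbc : b ≠ c) : orient a b c ≠ 0 :=
  fun h ↦ hP a ha b hb c hc hab hac hbc (collinear_of_orient_eq_zero h)

lemma mem_convexHull_of_orient_nonneg (habc : 0 < orient a b c) (hab : 0 ≤ orient a b d)
    (hbc : 0 ≤ orient b c d) (hca : 0 ≤ orient c a d) : d ∈ convexHull ℝ ({a, b, c} : Set Pt) := by
  have hsum : orient b c d + orient c a d + orient a b d = orient a b c := by
    unfold orient; ring
  have hmem : Finset.univ.centerMass ![orient b c d, orient c a d, orient a b d] ![a, b, c] ∈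
      convexHull ℝ ({a, b, c} : Set Pt) := by
    refine Finset.centerMass_mem_convexHull _ (fun i _ ↦ ?_) ?_ fun i _ ↦ ?_
    · fin_cases i <;> assumption
    · simpa [Fin.sum_univ_three, hsum] using habc
    · fin_cases i <;> simp
  convert hmem using 1
  simp only [Finset.centerMass, Fin.sum_univ_three, Matrix.cons_val_zero, Matrix.cons_val_one,
    Matrix.cons_val, hsum]
  ext <;> simp only [Prod.smul_fst, Prod.smul_snd, Prod.fst_add, Prod.snd_add, smul_eq_mul] <;>
    field_simp <;> unfold orient <;> ring

lemma openSegment_inter_nonempty (habc : 0 < orient a b c) (hbcd : 0 < orient b c d)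
    (habd : 0 < orient a b d) (hacd : 0 < orient a c d) :
    (openSegment ℝ a c ∩ openSegment ℝ b d).Nonempty := by
  set T := orient a b d + orient b c d with hT
  have hquad : orient a c d + orient a b c = T := by rw [hT]; unfold orient; ring
  have hpos : 0 < T := by positivity
  refine ⟨(orient b c d / T) • a + (orient a b d / T) • c,
    ⟨_, _, by positivity, by positivity, by rw [← add_div, add_comm, div_self hpos.ne'], rfl⟩,
    ⟨orient a c d / T, orient a b c / T, by positivity, by positivity,
      by rw [← add_div, hquad, div_self hpos.ne'], ?_⟩⟩
  ext <;> simp only [Prod.fst_add, Prod.smul_fst, Prod.snd_add, Prod.smul_snd, smul_eq_mul] <;>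
    field_simp <;> unfold orient <;> ring

lemma Cross.symm {e f : Sym2 Pt} (h : Cross e f) : Cross f e := by
  obtain ⟨hdisj, p, q, r, s, he, hf, hne⟩ := h
  exact ⟨fun x hf he ↦ hdisj x he hf, r, s, p, q, hf, he, Set.inter_comm _ _ ▸ hne⟩

lemma cross_of_orient_pos (habc : 0 < orient a b c) (hbcd : 0 < orient b c d)
    (habd : 0 < orient a b d) (hacd : 0 < orient a c d) : Cross s(a, c) s(b, d) := by
  refine ⟨fun x hx hx' ↦ ?_, a, c, b, d, rfl, rfl,
    openSegment_inter_nonempty habc hbcd habd hacd⟩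
  have := ne_of_orient_pos habd
  have := ne_of_orient_pos hbcd
  rw [Sym2.mem_iff] at hx hx'
  grind

/-- The points `p 0, …, p (n - 1)` are the vertices of a convex polygon, in counterclockwise
order. -/
def IsConvexPolygon {n : ℕ} (p : Fin n → Pt) : Prop :=
  ∀ ⦃i j l⦄, i < j → j < l → 0 < orient (p i) (p j) (p l)

lemma IsConvexPolygon.cross {n : ℕ} {p : Fin n → Pt} (hp : IsConvexPolygon p)
    {e f : Fin n × Fin n} (h : Interleaves e f) : Cross s(p e.1, p e.2) s(p f.1, p f.2) := by
  have hcross : ∀ {i j l m}, i < j → j < l → l < m → Cross s(p i, p l) s(p j, p m) :=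
    fun hij hjl hlm ↦ cross_of_orient_pos (hp hij hjl) (hp hjl hlm) (hp hij (hjl.trans hlm))
      (hp (hij.trans hjl) hlm)
  rcases h with ⟨h₁, h₂, h₃⟩ | ⟨h₁, h₂, h₃⟩
  · exact (hcross h₁ h₂ h₃).symm
  · exact hcross h₁ h₂ h₃

end PlaneGeometry

section AngularSweep

open Real Finset

/-- The direction in which `x` is seen from `o`, with `o` itself placed before every direction
(`Complex.arg` alone would give it the angle `0`). -/
noncomputable def sweepAngle (o x : Pt) : ℝ :=
  if x = o then -π else Complex.arg ⟨x.1 - o.1, x.2 - o.2⟩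

variable {o x y : Pt}

lemma sweepAngle_self (o : Pt) : sweepAngle o o = -π := if_pos rfl

lemma neg_pi_lt_sweepAngle (hx : x ≠ o) : -π < sweepAngle o x := by
  rw [sweepAngle, if_neg hx]; exact Complex.neg_pi_lt_arg _

lemma sweepAngle_mem_Ioc (hx : toLex o < toLex x) :
    sweepAngle o x ∈ Set.Ioc (-(π / 2)) (π / 2) := by
  have hne : x ≠ o := by rintro rfl; exact lt_irrefl _ hx
  rw [sweepAngle, if_neg hne, Set.mem_Ioc, Complex.neg_pi_div_two_lt_arg_iff,
    Complex.arg_le_pi_div_two_iff]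
  rw [Prod.Lex.toLex_lt_toLex] at hx
  grind

lemma exists_pos_orient_eq_mul_sin (hx : x ≠ o) (hy : y ≠ o) :
    ∃ r > 0, orient o x y = r * sin (sweepAngle o y - sweepAngle o x) := by
  have hnorm : ∀ {z : Pt}, z ≠ o → 0 < ‖(⟨z.1 - o.1, z.2 - o.2⟩ : ℂ)‖ := fun hz ↦
    norm_pos_iff.2 fun h ↦ hz <| by
      rw [Complex.ext_iff] at h
      exact Prod.ext (sub_eq_zero.1 h.1) (sub_eq_zero.1 h.2)
  refine ⟨_, mul_pos (hnorm hx) (hnorm hy), ?_⟩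
  simp only [sweepAngle, if_neg hx, if_neg hy]
  set v : ℂ := ⟨x.1 - o.1, x.2 - o.2⟩
  set w : ℂ := ⟨y.1 - o.1, y.2 - o.2⟩
  calc orient o x y = v.re * w.im - v.im * w.re := rfl
    _ = ‖v‖ * ‖w‖ * sin (w.arg - v.arg) := by
      rw [sin_sub, ← Complex.norm_mul_cos_arg v, ← Complex.norm_mul_sin_arg v,
        ← Complex.norm_mul_cos_arg w, ← Complex.norm_mul_sin_arg w]
      ring

lemma orient_pos_of_sweepAngle_lt (hx : toLex o < toLex x) (hy : toLex o < toLex y)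
    (hlt : sweepAngle o x < sweepAngle o y) : 0 < orient o x y := by
  obtain ⟨r, hr, h⟩ := exists_pos_orient_eq_mul_sin (o := o) (x := x) (y := y)
    (by rintro rfl; exact lt_irrefl _ hx) (by rintro rfl; exact lt_irrefl _ hy)
  have hx' := sweepAngle_mem_Ioc hx
  have hy' := sweepAngle_mem_Ioc hy
  rw [h]
  exact mul_pos hr (sin_pos_of_pos_of_lt_pi (by linarith) (by linarith [hx'.1, hy'.2]))

lemma GenPos.injOn_sweepAngle {P : Finset Pt} (hP : GenPos P) (ho : o ∈ P) :
    Set.InjOn (sweepAngle o) P := by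
  intro x hx y hy hxy
  by_contra hne
  by_cases hxo : x = o
  · subst hxo
    exact (neg_pi_lt_sweepAngle (Ne.symm hne)).ne (sweepAngle_self x ▸ hxy)
  by_cases hyo : y = o
  · subst hyo
    exact (neg_pi_lt_sweepAngle hne).ne (sweepAngle_self y ▸ hxy.symm)
  obtain ⟨r, -, h⟩ := exists_pos_orient_eq_mul_sin hxo hyo
  rw [hxy, sub_self, sin_zero, mul_zero] at h
  exact hP.orient_ne_zero ho hx hy (Ne.symm hxo) (Ne.symm hyo) hne h

lemma exists_strictMono_enumeration {α β : Type*} [LinearOrder β] {P : Finset α} {f : α → β}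
    (hf : Set.InjOn f P) : ∃ p : Fin #P → α, (∀ i, p i ∈ P) ∧ StrictMono (f ∘ p) := by
  let q : Fin #P → P := P.equivFin.symm
  let σ := Tuple.sort fun i ↦ f (q i)
  refine ⟨fun i ↦ q (σ i), fun i ↦ (q (σ i)).2, ?_⟩
  refine (Tuple.monotone_sort fun i ↦ f (q i)).strictMono_of_injective fun i j hij ↦ ?_
  have hq : q (σ i) = q (σ j) := Subtype.ext (hf (q _).2 (q _).2 hij)
  exact σ.injective (P.equivFin.symm.injective hq)

lemma ConvexPos.orient_pos_of_fan {P : Finset Pt} (hP : ConvexPos P) {a b c : Pt} (ho : o ∈ P)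
    (ha : a ∈ P) (hb : b ∈ P) (hc : c ∈ P) (hab : 0 < orient o a b) (hbc : 0 < orient o b c)
    (hac : 0 < orient o a c) : 0 < orient a b c := by
  have hab' := ne_of_orient_pos hab
  have hbc' := ne_of_orient_pos hbc
  by_contra! hle
  have hb_mem : b ∈ convexHull ℝ ({o, a, c} : Set Pt) := by
    refine mem_convexHull_of_orient_nonneg hac hab.le ?_ ?_
    · rw [orient_swap_right]; linarith
    · rw [← orient_rotate c o b]; exact hbc.le
  exact hP.2 b hb (convexHull_mono (by grind) hb_mem)

theorem ConvexPos.exists_isConvexPolygon {P : Finset Pt} (hP : ConvexPos P) :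
    ∃ p : Fin #P → Pt, (∀ i, p i ∈ P) ∧ p.Injective ∧ IsConvexPolygon p := by
  rcases P.eq_empty_or_nonempty with rfl | hne
  · exact ⟨Fin.elim0, Fin.rec0, Fin.rec0, Fin.rec0⟩
  obtain ⟨o, ho, hmin⟩ := exists_min_image P toLex hne
  obtain ⟨p, hpP, hmono⟩ := exists_strictMono_enumeration (hP.1.injOn_sweepAngle ho)
  have hlex : ∀ {i}, p i ≠ o → toLex o < toLex (p i) := fun {i} h ↦
    (hmin _ (hpP i)).lt_of_ne fun h' ↦ h (toLex_inj.1 h').symm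
  have hne_of_lt : ∀ {i j}, i < j → p j ≠ o := by
    intro i j hij hj
    have hi : sweepAngle o (p i) < sweepAngle o (p j) := hmono hij
    by_cases hio : p i = o
    · rw [hio, hj] at hi; exact lt_irrefl _ hi
    · rw [hj, sweepAngle_self] at hi; exact hi.not_gt (neg_pi_lt_sweepAngle hio)
  refine ⟨p, hpP, hmono.injective.of_comp, fun i j l hij hjl ↦ ?_⟩
  have hpos : ∀ {i j}, p i ≠ o → i < j → 0 < orient o (p i) (p j) := fun hi hij ↦
    orient_pos_of_sweepAngle_lt (hlex hi) (hlex (hne_of_lt hij)) (hmono hij)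
  have hojl := hpos (hne_of_lt hij) hjl
  by_cases hio : p i = o
  · exact hio ▸ hojl
  · exact hP.orient_pos_of_fan ho (hpP i) (hpP j) (hpP l) (hpos hio hij) hojl
      (hpos hio (hij.trans hjl))

end AngularSweep

section KPlaneGraphs

open Finset

variable {P : Finset Pt} {k : ℕ}

lemma mk_mem_KEdges {a b : Pt} (ha : a ∈ P) (hb : b ∈ P) (hab : a ≠ b) : s(a, b) ∈ KEdges P :=
  ⟨a, ha, b, hb, hab, rfl⟩

lemma finite_KEdges (P : Finset Pt) : (KEdges P).Finite := by
  refine P.sym2.finite_toSet.subset ?_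
  rintro _ ⟨a, ha, b, hb, -, rfl⟩
  exact mem_coe.2 (mk_mem_sym2_iff.2 ⟨ha, hb⟩)

lemma exists_length_threshold (hk : 1 ≤ k) :
    ∃ t : ℕ, 2 * t ≤ 2.465 * √k ∧ (k + 1 : ℝ) ≤ (2.465 * √k - t) * (t + 1) := by
  have hsq := Real.sq_sqrt (Nat.cast_nonneg k : (0 : ℝ) ≤ k)
  have hone : 1 ≤ √(k : ℝ) := Real.one_le_sqrt.2 (mod_cast hk)
  obtain ⟨t, ht⟩ : ∃ t, k.sqrt = t + 1 := Nat.exists_eq_add_one.2 (Nat.sqrt_pos.2 hk)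
  have hlow : (t + 1 : ℝ) ≤ √k := by exact_mod_cast ht ▸ Real.nat_sqrt_le_real_sqrt (a := k)
  have hupp : √k ≤ (t + 1 + 1 : ℝ) := by
    exact_mod_cast ht ▸ Real.real_sqrt_le_nat_sqrt_succ (a := k)
  have hmul := mul_nonneg (sub_nonneg.2 hlow) (sub_nonneg.2 hupp)
  refine ⟨t, by linarith, ?_⟩
  rcases t.eq_zero_or_pos with rfl | ht₀
  · have hk₃ : k ≤ 3 := Nat.le_of_lt_succ (Nat.sqrt_lt'.1 (by lia : k.sqrt < 2))
    have hk₃' : √(k : ℝ) ≤ 1.7321 := Real.sqrt_le_iff.2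
      ⟨by norm_num, (Nat.cast_le.2 hk₃).trans (by norm_num)⟩
    push_cast
    nlinarith
  · have ht₁ : (1 : ℝ) ≤ t := mod_cast ht₀
    nlinarith

theorem KPlane.card_diagonals_le {E : Set (Sym2 Pt)} (hE : KPlane k E) (hfin : E.Finite)
    (hk : 1 ≤ k) {n : ℕ} (hn : 3 ≤ n) {p : Fin n → Pt} (hinj : p.Injective)
    (hp : IsConvexPolygon p) {D : Finset (Fin n × Fin n)} (hD : ∀ e ∈ D, IsDiagonal univ e)
    (hDE : ∀ e ∈ D, s(p e.1, p e.2) ∈ E) : (#D : ℝ) ≤ 2.465 * √k * (n - 3) := by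
  obtain ⟨t, ht, hA⟩ := exists_length_threshold hk
  have hbound := card_le_of_card_interleaves_le ht hA (S := univ) (by simpa using hn) hD
  rw [card_univ, Fintype.card_fin] at hbound
  refine hbound fun e he ↦ le_trans ?_ (hE _ (hDE e he))
  rw [← Set.ncard_coe_finset]
  refine Set.ncard_le_ncard_of_injOn (fun f ↦ s(p f.1, p f.2)) (fun f hf ↦ ?_)
    (fun f hf g hg hfg ↦ ?_) (hfin.subset fun f hf ↦ hf.1)
  · obtain ⟨hfD, hcross⟩ := mem_filter.1 hf
    exact ⟨hDE f hfD, hp.cross hcross⟩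
  · have hf' := (hD f (mem_filter.1 hf).1).left_lt_right
    have hg' := (hD g (mem_filter.1 hg).1).left_lt_right
    rcases Sym2.eq_iff.1 hfg with ⟨h₁, h₂⟩ | ⟨h₁, h₂⟩
    · exact Prod.ext (hinj h₁) (hinj h₂)
    · exact absurd (hinj h₁ ▸ hinj h₂ ▸ hf') hg'.not_gt

variable {ι : Type*} [Fintype ι] {F : ι → Set (Sym2 Pt)}

theorem ConvexPos.card_le_of_kPlane_cover (hP : ConvexPos P) (hcard : 4 ≤ #P) (hk : 1 ≤ k)
    (hcover : KEdges P ⊆ ⋃ i, F i) (hfin : ∀ i, (F i).Finite) (hplane : ∀ i, KPlane k (F i)) :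
    (#P : ℝ) ≤ Fintype.card ι * (4.93 * √k) := by
  classical
  obtain ⟨p, hpP, hinj, hp⟩ := hP.exists_isConvexPolygon
  set D : Finset (Fin #P × Fin #P) := {e ∈ univ ×ˢ univ | IsDiagonal univ e}
  have hdiag : ∀ e ∈ D, IsDiagonal univ e := fun e he ↦ (mem_filter.1 he).2
  have hcolour : D ⊆ univ.biUnion fun i ↦ {e ∈ D | s(p e.1, p e.2) ∈ F i} := by
    intro e he
    obtain ⟨i, hi⟩ := Set.mem_iUnion.1 <| hcover <|
      mk_mem_KEdges (hpP e.1) (hpP e.2) (hinj.ne (hdiag e he).left_lt_right.ne)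
    exact mem_biUnion.2 ⟨i, mem_univ i, mem_filter.2 ⟨he, hi⟩⟩
  have hupper : (#D : ℝ) ≤ Fintype.card ι * (2.465 * √k * (#P - 3)) := calc
    (#D : ℝ) ≤ ∑ i, (#{e ∈ D | s(p e.1, p e.2) ∈ F i} : ℝ) :=
      mod_cast (card_le_card hcolour).trans card_biUnion_le
    _ ≤ ∑ _i : ι, 2.465 * √k * (#P - 3) := sum_le_sum fun i _ ↦
      (hplane i).card_diagonals_le (hfin i) hk (by lia) hinj hp
        (fun e he ↦ hdiag e (mem_of_mem_filter e he)) fun e he ↦ (mem_filter.1 he).2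
    _ = _ := by rw [sum_const, nsmul_eq_mul, card_univ]
  have hlower : (#P * (#P - 1) / 2 : ℝ) ≤ #D + #P := by
    have h := choose_two_card_le_card_diagonals_add (S := (univ : Finset (Fin #P)))
    rw [card_univ, Fintype.card_fin] at h
    rw [← Nat.cast_choose_two]
    exact_mod_cast h
  have hfour : (4 : ℝ) ≤ #P := mod_cast hcard
  have hpos : (0 : ℝ) < #P - 3 := by linarith
  exact le_of_mul_le_mul_right (by linarith) hpos

theorem stmt_4_general (hP : ConvexPos P) (hk : 1 ≤ k) (hcover : KEdges P ⊆ ⋃ i, F i)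
    (hfin : ∀ i, (F i).Finite) (hplane : ∀ i, KPlane k (F i)) :
    ((#P : ℝ) - 1) / (4.93 * √k) ≤ Fintype.card ι := by
  have hsqrt : 1 ≤ √(k : ℝ) := Real.one_le_sqrt.2 (mod_cast hk)
  rw [div_le_iff₀ (by positivity)]
  rcases le_or_gt 4 #P with hlarge | hsmall
  · linarith [hP.card_le_of_kPlane_cover hlarge hk hcover hfin hplane]
  rcases isEmpty_or_nonempty ι with hι | hι
  · have hone : #P ≤ 1 := card_le_one.2 fun a ha b hb ↦ by
      by_contra hab
      simpa using hcover (mk_mem_KEdges ha hb hab)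
    simpa using hone
  · have hthree : (#P : ℝ) ≤ 3 := mod_cast Nat.le_of_lt_succ hsmall
    have hclass : (1 : ℝ) ≤ Fintype.card ι := mod_cast Fintype.card_pos
    nlinarith

end KPlaneGraphs

/-- For `n` points in convex position and `k ≥ 1`, every partition of `K(P)`
into `k`-plane classes has at least `(n-1)/(4.93·√k)` classes. -/
theorem stmt_4 (n : ℕ) (P : Finset Pt) (hP : ConvexPos P) (hcard : P.card = n)
    (k : ℕ) (hk : 1 ≤ k)
    (c : ℕ) (F : Fin c → Set (Sym2 Pt))
    (hunion : (⋃ i, F i) = KEdges P)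
    (hdisj : Pairwise fun i j => Disjoint (F i) (F j))
    (hplane : ∀ i, KPlane k (F i)) :
    ((n : ℝ) - 1) / (4.93 * Real.sqrt k) ≤ (c : ℝ) := by
  have hfin : ∀ i, (F i).Finite := fun i ↦
    (finite_KEdges P).subset (hunion ▸ Set.subset_iUnion F i)
  simpa [hcard] using stmt_4_general hP hk hunion.ge hfin hplane
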